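/- Let μ be a probability measure on a Polish space X and χ a nonnegative measurable function with ∫ e^{a_o χ} dμ < ∞ for some a_o > 0. Then the Orlicz norm ‖χ‖_ρ is finite, and for any probability measure ν absolutely continuous with respect to μ whose density f = dν/dμ satisfies ∫ |f| log|f| dμ < ∞, the weighted total variation ∫ χ d|ν − μ| is finite and satisfies ∫ χ d|ν − μ| ≤ ‖χ‖_ρ (2√(H(ν|μ)) + H(ν|μ)), where |ν − μ| denotes the total variation measure of the signed measure ν − μ. -/

import Mathlib

open MeasureTheory ENNReal Set
open scoped NNReal ENNReal

noncomputable section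

open scoped Classical in
/-- Relative entropy `H(ν|μ)`. -/
def relEntropy {X : Type*} [MeasurableSpace X] (ν μ : Measure X) : ℝ≥0∞ :=
  if ν ≪ μ ∧ Integrable (fun x => Real.log (ν.rnDeriv μ x).toReal) ν
  then ENNReal.ofReal (∫ x, Real.log (ν.rnDeriv μ x).toReal ∂ν) else ⊤

/-- Orlicz norm for the Young function `ρ(s) = e^{|s|} − 1`. -/
def orliczNormE {X : Type*} [MeasurableSpace X] (μ : Measure X) (φ : X → ℝ) : ℝ≥0∞ :=
  sInf {b : ℝ≥0∞ | 0 < b ∧ ∫⁻ x, ENNReal.ofReal (Real.exp (|φ x| / b.toReal)) ∂μ ≤ 2}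

/-!
Write `f = dν/dμ`, so that `|ν - μ|` has density `|f - 1|` with respect to `μ`, and let
`h f = f log f + 1 - f`, whose `μ`-integral is the relative entropy `H`. The convex conjugate of
`h` on `[0, ∞)` is `exp t - 1`, and the Fenchel-Young inequality at `t` and `-t` gives
`t |f - 1| ≤ h f + (exp t - t - 1)` for `t ≥ 0`. Apply it to `s φ` in place of `t`, with
`0 < s ≤ 1`: as `exp t - t - 1` vanishes to second order, it scales by at most `s ^ 2`, whence
`φ |f - 1| ≤ h f / s + s (exp φ - 1)`. If `φ` lies in the unit ball of the Orlicz norm,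
integration gives `∫ φ d|ν - μ| ≤ H / s + s`. Choosing `s` well bounds this by `2 √H + H`, and
homogeneity replaces the unit ball by an arbitrary weight.
-/

open InformationTheory

section RealInequalities

lemma mul_le_klFun_add_exp_sub_one {x : ℝ} (hx : 0 ≤ x) (u : ℝ) :
    u * x ≤ klFun x + (Real.exp u - 1) := by
  rw [klFun_apply]
  obtain rfl | hx := hx.eq_or_lt
  · simpa using (Real.exp_pos u).le
  · have h := Real.add_one_le_exp (u - Real.log x)
    rw [Real.exp_sub, Real.exp_log hx, le_div_iff₀ hx] at h
    linarith

lemma mul_abs_sub_one_le_klFun_add {t x : ℝ} (ht : 0 ≤ t) (hx : 0 ≤ x) :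
    t * |x - 1| ≤ klFun x + (Real.exp t - t - 1) := by
  obtain h | h := le_total 1 x
  · rw [abs_of_nonneg (sub_nonneg.2 h)]
    linarith [mul_le_klFun_add_exp_sub_one hx t]
  · have hsinh := Real.self_le_sinh_iff.2 ht
    rw [Real.sinh_eq] at hsinh
    rw [abs_of_nonpos (sub_nonpos.2 h)]
    linarith [mul_le_klFun_add_exp_sub_one hx (-t)]

variable {s : ℝ}

lemma exp_mul_le_one_add_mul (hs0 : 0 ≤ s) (hs1 : s ≤ 1) (t : ℝ) :
    Real.exp (s * t) ≤ 1 + s * (Real.exp t - 1) := by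
  have h := convexOn_exp.2 (mem_univ t) (mem_univ 0) hs0 (sub_nonneg.2 hs1) (by ring)
  simp only [smul_eq_mul, mul_zero, add_zero, Real.exp_zero, mul_one] at h
  linarith

lemma exp_mul_sub_sub_one_le_sq_mul (hs0 : 0 ≤ s) (hs1 : s ≤ 1) {t : ℝ} (ht : 0 ≤ t) :
    Real.exp (s * t) - s * t - 1 ≤ s ^ 2 * (Real.exp t - t - 1) := by
  -- `g` is nondecreasing since, after division by `s`, `g' ≥ 0` is convexity of `exp`.
  let g : ℝ → ℝ := fun x ↦ s ^ 2 * (Real.exp x - x - 1) - (Real.exp (s * x) - s * x - 1)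
  have hderiv (x : ℝ) :
      HasDerivAt g (s ^ 2 * (Real.exp x - 1) - (Real.exp (s * x) * s - s)) x := by
    have hlin : HasDerivAt (fun x ↦ s * x) s x := hasDerivAt_const_mul s
    exact ((((Real.hasDerivAt_exp x).sub (hasDerivAt_id x)).sub_const 1).const_mul (s ^ 2)).sub
      ((hlin.exp.sub hlin).sub_const 1)
  have hmono : Monotone g := by
    refine monotone_of_hasDerivAt_nonneg hderiv fun x ↦ ?_
    have := mul_le_mul_of_nonneg_left (exp_mul_le_one_add_mul hs0 hs1 x) hs0
    simp only [Pi.zero_apply]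
    linarith
  have hg0 : g 0 = 0 := by simp [g]
  exact sub_nonneg.1 (hg0 ▸ hmono ht)

lemma mul_abs_sub_one_le_klFun_div_add (hs0 : 0 < s) (hs1 : s ≤ 1) {t x : ℝ}
    (ht : 0 ≤ t) (hx : 0 ≤ x) :
    t * |x - 1| ≤ klFun x / s + s * (Real.exp t - 1) := by
  have hyoung := mul_abs_sub_one_le_klFun_add (mul_nonneg hs0.le ht) hx
  have hexp := exp_mul_sub_sub_one_le_sq_mul hs0.le hs1 ht
  have hst := mul_nonneg (sq_nonneg s) ht
  rw [div_add' _ _ _ hs0.ne', le_div_iff₀ hs0]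
  linarith

end RealInequalities

section RelEntropy

variable {X : Type*} [MeasurableSpace X] {μ ν : Measure X}

lemma relEntropy_eq_klDiv (h : ν univ = μ univ) : relEntropy ν μ = klDiv ν μ := by
  rw [relEntropy, klDiv_def, measureReal_def, measureReal_def, h, add_sub_cancel_right]
  rfl

lemma relEntropy_ne_top_of_integrable_mul_log [SigmaFinite ν] [ν.HaveLebesgueDecomposition μ]
    (hac : ν ≪ μ)
    (hint : Integrable
      (fun x ↦ (ν.rnDeriv μ x).toReal * Real.log (ν.rnDeriv μ x).toReal) μ) :
    relEntropy ν μ ≠ ⊤ := by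
  rw [relEntropy, if_pos ⟨hac, (integrable_rnDeriv_mul_log_iff hac).1 hint⟩]
  exact ENNReal.ofReal_ne_top

end RelEntropy

section TotalVariation

variable {X : Type*} [MeasurableSpace X] {μ ν : Measure X}

lemma totalVariation_sub_le_withDensity [IsFiniteMeasure μ] [IsFiniteMeasure ν] (hac : ν ≪ μ) :
    (ν.toSignedMeasure - μ.toSignedMeasure).totalVariation ≤
      μ.withDensity fun x ↦ ‖(ν.rnDeriv μ x).toReal - 1‖ₑ := by
  rw [SignedMeasure.totalVariation_eq_variation]
  refine VectorMeasure.variation_le_of_forall_enorm_le fun E hE ↦ ?_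
  have hsub : (ν.toSignedMeasure - μ.toSignedMeasure) E =
      ∫ x in E, ((ν.rnDeriv μ x).toReal - 1) ∂μ := by
    rw [integral_sub Measure.integrable_toReal_rnDeriv.integrableOn (integrable_const _),
      Measure.setIntegral_toReal_rnDeriv hac, Measure.toSignedMeasure_sub_apply hE]
    simp
  rw [hsub, withDensity_apply _ hE]
  exact enorm_integral_le_lintegral_enorm _

lemma lintegral_totalVariation_sub_le_klDiv_div_add [IsFiniteMeasure μ] [IsFiniteMeasure ν]
    (φ : X → ℝ) {s : ℝ} (hs0 : 0 < s) (hs1 : s ≤ 1) :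
    ∫⁻ x, ‖φ x‖ₑ ∂(ν.toSignedMeasure - μ.toSignedMeasure).totalVariation ≤
      klDiv ν μ / ENNReal.ofReal s +
        ENNReal.ofReal s * ∫⁻ x, ENNReal.ofReal (Real.exp |φ x| - 1) ∂μ := by
  by_cases hac : ν ≪ μ
  swap
  · simp [klDiv_of_not_ac hac, ENNReal.top_div]
  have hpointwise (x : X) : ‖(ν.rnDeriv μ x).toReal - 1‖ₑ * ‖φ x‖ₑ ≤
      ENNReal.ofReal (klFun (ν.rnDeriv μ x).toReal) / ENNReal.ofReal s +
        ENNReal.ofReal s * ENNReal.ofReal (Real.exp |φ x| - 1) := by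
    rw [← enorm_mul, Real.enorm_eq_ofReal_abs, abs_mul, mul_comm,
      ← ENNReal.ofReal_div_of_pos hs0, ← ENNReal.ofReal_mul hs0.le]
    exact (ENNReal.ofReal_le_ofReal <| mul_abs_sub_one_le_klFun_div_add hs0 hs1 (abs_nonneg _)
      ENNReal.toReal_nonneg).trans ENNReal.ofReal_add_le
  calc ∫⁻ x, ‖φ x‖ₑ ∂(ν.toSignedMeasure - μ.toSignedMeasure).totalVariation
    _ ≤ ∫⁻ x, ‖φ x‖ₑ ∂μ.withDensity fun x ↦ ‖(ν.rnDeriv μ x).toReal - 1‖ₑ :=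
      lintegral_mono' (totalVariation_sub_le_withDensity hac) le_rfl
    _ ≤ ∫⁻ x, ‖(ν.rnDeriv μ x).toReal - 1‖ₑ * ‖φ x‖ₑ ∂μ :=
      lintegral_withDensity_le_lintegral_mul μ (by fun_prop) _
    _ ≤ ∫⁻ x, ENNReal.ofReal (klFun (ν.rnDeriv μ x).toReal) / ENNReal.ofReal s +
          ENNReal.ofReal s * ENNReal.ofReal (Real.exp |φ x| - 1) ∂μ :=
      lintegral_mono hpointwise
    _ = _ := by
      rw [lintegral_add_left (by fun_prop), lintegral_const_mul' _ _ ENNReal.ofReal_ne_top,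
        klDiv_eq_lintegral_klFun_of_ac hac]
      simp only [div_eq_mul_inv]
      rw [lintegral_mul_const' _ _ (by simpa using hs0)]

lemma lintegral_totalVariation_sub_le_sqrt_klDiv [IsFiniteMeasure μ] [IsFiniteMeasure ν]
    (hkl : klDiv ν μ ≠ ⊤) {φ : X → ℝ} (hφ : ∫⁻ x, ENNReal.ofReal (Real.exp |φ x| - 1) ∂μ ≤ 1) :
    ∫⁻ x, ‖φ x‖ₑ ∂(ν.toSignedMeasure - μ.toSignedMeasure).totalVariation ≤
      ENNReal.ofReal (2 * √(klDiv ν μ).toReal + (klDiv ν μ).toReal) := by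
  obtain rfl | hne := eq_or_ne ν μ
  · simp [SignedMeasure.totalVariation_zero]
  -- With `t = √H`, this value of `s ≤ 1` gives `H / s + s = t + t ^ 2 + t / (1 + t) ≤ 2 * t + H`.
  set t : ℝ := √(klDiv ν μ).toReal
  have ht : 0 < t := Real.sqrt_pos.2 <| ENNReal.toReal_pos (mt klDiv_eq_zero_iff.1 hne) hkl
  have hsq : (klDiv ν μ).toReal = t ^ 2 := (Real.sq_sqrt ENNReal.toReal_nonneg).symm
  have hs0 : 0 < t / (1 + t) := by positivity
  have hs1 : t / (1 + t) ≤ 1 := div_le_one_of_le₀ (by linarith) (by positivity)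
  calc ∫⁻ x, ‖φ x‖ₑ ∂(ν.toSignedMeasure - μ.toSignedMeasure).totalVariation
    _ ≤ klDiv ν μ / ENNReal.ofReal (t / (1 + t)) + ENNReal.ofReal (t / (1 + t)) * 1 := by
      grw [lintegral_totalVariation_sub_le_klDiv_div_add φ hs0 hs1, hφ]
    _ = ENNReal.ofReal (t ^ 2 / (t / (1 + t)) + t / (1 + t)) := by
      rw [← ENNReal.ofReal_toReal hkl, hsq, ← ENNReal.ofReal_div_of_pos hs0, mul_one,
        ← ENNReal.ofReal_add (by positivity) hs0.le]
    _ ≤ ENNReal.ofReal (2 * t + (klDiv ν μ).toReal) := by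
      refine ENNReal.ofReal_le_ofReal ?_
      have hdiv : t ^ 2 / (t / (1 + t)) = t + t ^ 2 := by field_simp
      have hle : t / (1 + t) ≤ t := div_le_self ht.le (by linarith)
      linarith

end TotalVariation

section OrliczNorm

variable {X : Type*} [MeasurableSpace X] {μ ν : Measure X}

lemma orliczNormE_le_ofReal {φ : X → ℝ} {b : ℝ} (hb : 0 < b)
    (hφ : ∫⁻ x, ENNReal.ofReal (Real.exp (|φ x| / b)) ∂μ ≤ 2) :
    orliczNormE μ φ ≤ ENNReal.ofReal b :=
  sInf_le ⟨ENNReal.ofReal_pos.2 hb, by rwa [ENNReal.toReal_ofReal hb.le]⟩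

variable [IsProbabilityMeasure μ]

lemma lintegral_exp_abs_eq_one_add (φ : X → ℝ) :
    ∫⁻ x, ENNReal.ofReal (Real.exp |φ x|) ∂μ =
      1 + ∫⁻ x, ENNReal.ofReal (Real.exp |φ x| - 1) ∂μ := by
  have hsplit (x : X) :
      ENNReal.ofReal (Real.exp |φ x|) = 1 + ENNReal.ofReal (Real.exp |φ x| - 1) := by
    rw [← ENNReal.ofReal_one, ← ENNReal.ofReal_add zero_le_one (by simp), add_sub_cancel]
  simp only [hsplit, lintegral_add_left measurable_const, lintegral_const, measure_univ, mul_one]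

lemma orliczNormE_lt_top_of_lintegral_exp_lt_top {φ : X → ℝ} {a : ℝ} (ha : 0 < a)
    (hφ : ∫⁻ x, ENNReal.ofReal (Real.exp (a * |φ x|)) ∂μ < ⊤) :
    orliczNormE μ φ < ⊤ := by
  set K : ℝ := (∫⁻ x, ENNReal.ofReal (Real.exp (a * |φ x|)) ∂μ).toReal
  have hK_ofReal : ENNReal.ofReal K = ∫⁻ x, ENNReal.ofReal (Real.exp (a * |φ x|)) ∂μ :=
    ENNReal.ofReal_toReal hφ.ne
  have hK0 : 0 ≤ K := ENNReal.toReal_nonneg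
  have hb : 0 < (1 + K) / a := by positivity
  have hs0 : 0 ≤ (1 + K)⁻¹ := by positivity
  have hs1 : (1 + K)⁻¹ ≤ 1 := inv_le_one_of_one_le₀ (by linarith)
  have hpointwise (x : X) : ENNReal.ofReal (Real.exp (|φ x| / ((1 + K) / a))) ≤
      1 + ENNReal.ofReal (1 + K)⁻¹ * ENNReal.ofReal (Real.exp (a * |φ x|)) := by
    rw [← ENNReal.ofReal_mul hs0, ← ENNReal.ofReal_one,
      ← ENNReal.ofReal_add zero_le_one (by positivity)]
    refine ENNReal.ofReal_le_ofReal ?_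
    have hconvex := exp_mul_le_one_add_mul hs0 hs1 (a * |φ x|)
    rw [show |φ x| / ((1 + K) / a) = (1 + K)⁻¹ * (a * |φ x|) by field_simp]
    linarith
  refine (orliczNormE_le_ofReal hb ?_).trans_lt ENNReal.ofReal_lt_top
  calc ∫⁻ x, ENNReal.ofReal (Real.exp (|φ x| / ((1 + K) / a))) ∂μ
    _ ≤ ∫⁻ x, 1 + ENNReal.ofReal (1 + K)⁻¹ * ENNReal.ofReal (Real.exp (a * |φ x|)) ∂μ :=
      lintegral_mono hpointwise
    _ = 1 + ENNReal.ofReal ((1 + K)⁻¹ * K) := by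
      rw [lintegral_add_left measurable_const, lintegral_const_mul' _ _ ENNReal.ofReal_ne_top,
        ← hK_ofReal, ENNReal.ofReal_mul hs0, lintegral_one, measure_univ]
    _ ≤ 1 + 1 := by
      gcongr
      exact ENNReal.ofReal_le_one.2 <| inv_mul_le_one_of_le₀ (by linarith) (by positivity)
    _ = 2 := one_add_one_eq_two

lemma lintegral_totalVariation_sub_le_orliczNormE_mul [IsFiniteMeasure ν]
    (hkl : klDiv ν μ ≠ ⊤) (χ : X → ℝ) :
    ∫⁻ x, ‖χ x‖ₑ ∂(ν.toSignedMeasure - μ.toSignedMeasure).totalVariation ≤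
      orliczNormE μ χ * ENNReal.ofReal (2 * √(klDiv ν μ).toReal + (klDiv ν μ).toReal) := by
  obtain rfl | hne := eq_or_ne ν μ
  · simp [SignedMeasure.totalVariation_zero]
  have hH : 0 < (klDiv ν μ).toReal := ENNReal.toReal_pos (mt klDiv_eq_zero_iff.1 hne) hkl
  set C : ℝ := 2 * √(klDiv ν μ).toReal + (klDiv ν μ).toReal
  have hC0 : ENNReal.ofReal C ≠ 0 := (ENNReal.ofReal_pos.2 (by positivity)).ne'
  rw [← ENNReal.div_le_iff_le_mul (.inl hC0) (.inl ENNReal.ofReal_ne_top)]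
  refine le_sInf fun b ⟨hb0, hb⟩ ↦ ?_
  obtain rfl | hbtop := eq_or_ne b ⊤
  · exact le_top
  rw [ENNReal.div_le_iff_le_mul (.inl hC0) (.inl ENNReal.ofReal_ne_top)]
  have hb_pos : 0 < b.toReal := ENNReal.toReal_pos hb0.ne' hbtop
  have hscale (x : X) : ‖χ x‖ₑ = b * ‖χ x / b.toReal‖ₑ := by
    rw [← ENNReal.ofReal_toReal hbtop, ENNReal.toReal_ofReal hb_pos.le,
      ← Real.enorm_of_nonneg hb_pos.le, ← enorm_mul, mul_div_cancel₀ _ hb_pos.ne']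
  have hunit : ∫⁻ x, ENNReal.ofReal (Real.exp |χ x / b.toReal| - 1) ∂μ ≤ 1 := by
    have habs (x : X) : |χ x| / b.toReal = |χ x / b.toReal| := by rw [abs_div, abs_of_pos hb_pos]
    simp only [habs] at hb
    rwa [lintegral_exp_abs_eq_one_add, ← one_add_one_eq_two,
      ENNReal.add_le_add_iff_left ENNReal.one_ne_top] at hb
  simp only [hscale]
  grw [lintegral_const_mul' _ _ hbtop, lintegral_totalVariation_sub_le_sqrt_klDiv hkl hunit]

end OrliczNorm

theorem weighted_CKP_general {X : Type*} [MeasurableSpace X]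
    {μ ν : Measure X} [IsProbabilityMeasure μ] [IsProbabilityMeasure ν]
    {χ : X → ℝ} (hχ : AEMeasurable χ μ) {a₀ : ℝ} (ha₀ : 0 < a₀)
    (hχexp : ∫⁻ x, ENNReal.ofReal (Real.exp (a₀ * |χ x|)) ∂μ < ⊤)
    (hent : relEntropy ν μ ≠ ⊤) :
    orliczNormE μ χ < ⊤ ∧
      Integrable χ (ν.toSignedMeasure - μ.toSignedMeasure).totalVariation ∧
      ∫ x, |χ x| ∂(ν.toSignedMeasure - μ.toSignedMeasure).totalVariation ≤
        (orliczNormE μ χ).toReal * (2 * √(relEntropy ν μ).toReal + (relEntropy ν μ).toReal) := by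
  rw [relEntropy_eq_klDiv (by simp)] at hent ⊢
  have hac : ν ≪ μ := (klDiv_ne_top_iff.1 hent).1
  have hnorm := orliczNormE_lt_top_of_lintegral_exp_lt_top ha₀ hχexp
  have hbound := lintegral_totalVariation_sub_le_orliczNormE_mul hent χ
  have hfinite : orliczNormE μ χ *
      ENNReal.ofReal (2 * √(klDiv ν μ).toReal + (klDiv ν μ).toReal) < ⊤ :=
    ENNReal.mul_lt_top hnorm ENNReal.ofReal_lt_top
  have htv_ac := (totalVariation_sub_le_withDensity hac).absolutelyContinuous.trans
    (withDensity_absolutelyContinuous _ _)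
  have hmeas := (hχ.mono_ac htv_ac).aestronglyMeasurable
  refine ⟨hnorm, ⟨hmeas, hbound.trans_lt hfinite⟩, ?_⟩
  simp only [← Real.norm_eq_abs]
  rw [integral_norm_eq_lintegral_enorm hmeas]
  refine (ENNReal.toReal_mono hfinite.ne hbound).trans_eq ?_
  rw [ENNReal.toReal_mul, ENNReal.toReal_ofReal (by positivity)]

/-- Weighted Csiszár–Kullback–Pinsker inequality. -/
theorem weighted_CKP
    {X : Type*} [TopologicalSpace X] [PolishSpace X] [MeasurableSpace X] [BorelSpace X]
    (μ : Measure X) [IsProbabilityMeasure μ]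
    (χ : X → ℝ) (hχmeas : Measurable χ) (hχ0 : ∀ x, 0 ≤ χ x)
    (a₀ : ℝ) (ha₀ : 0 < a₀)
    (hχexp : ∫⁻ x, ENNReal.ofReal (Real.exp (a₀ * χ x)) ∂μ < ⊤)
    (ν : Measure X) [IsProbabilityMeasure ν]
    (hac : ν ≪ μ)
    (hint : Integrable
      (fun x => (ν.rnDeriv μ x).toReal * Real.log (ν.rnDeriv μ x).toReal) μ) :
    orliczNormE μ χ < ⊤ ∧
      (∫⁻ x, ENNReal.ofReal (χ x)
          ∂((ν.toSignedMeasure - μ.toSignedMeasure).totalVariation)) < ⊤ ∧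
      ∫ x, χ x ∂((ν.toSignedMeasure - μ.toSignedMeasure).totalVariation) ≤
        (orliczNormE μ χ).toReal *
          (2 * Real.sqrt (relEntropy ν μ).toReal + (relEntropy ν μ).toReal) := by
  have habs (x : X) : |χ x| = χ x := abs_of_nonneg (hχ0 x)
  obtain ⟨hnorm, hχint, hle⟩ := weighted_CKP_general hχmeas.aemeasurable ha₀
    (by simpa only [habs] using hχexp) (relEntropy_ne_top_of_integrable_mul_log hac hint)
  exact ⟨hnorm, (hasFiniteIntegral_iff_ofReal (ae_of_all _ hχ0)).1 hχint.2,
    by simpa only [habs] using hle⟩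

end
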